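/- arXiv:1003.3989 — 2 statements merged into one kernel-verified Lean document; each statement's English description precedes it below -/
import Mathlib

section
/- Let n ≥ 2 be an integer and λ a real number such that 2λ − n + 2 is not a nonpositive integer and λ − (n−3)/2 is not a nonpositive integer. Then for every real s with 0 < s < 1: F(λ, λ − n/2 + 1; 2λ − n + 2; 4s/(1+s)²) = (1+s)^{2λ} · F(λ, (n−1)/2; λ − (n−3)/2; s²). (This is the quadratic hypergeometric transformation instance derived in the proof of Proposition 4.1; note 0 < 4s/(1+s)² < 1 and 0 < s² < 1.) -/
/-- Pochhammer symbol `(x)_k = x (x+1) ⋯ (x+k-1)`, with `(x)_0 = 1`. -/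
noncomputable def poch (x : ℝ) : ℕ → ℝ
  | 0 => 1
  | k + 1 => poch x k * (x + k)

/-- Gauss hypergeometric series `F(a,b;c;x) = ∑_{k≥0} (a)_k (b)_k / ((c)_k k!) x^k`. -/
noncomputable def hypF (a b c x : ℝ) : ℝ :=
  ∑' k : ℕ, poch a k * poch b k / (poch c k * (k.factorial : ℝ)) * x ^ k


lemma aux_congr {f g : ℕ → ℝ} {S : ℝ} (h : ∀ k, f k = g k) (hg : HasSum g S) : HasSum f S := by
  rwa [funext h]

lemma aux_fps (u : ℕ → ℝ) (f : ℝ → ℝ)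
    (h : ∀ x : ℝ, |x| < 1 → HasSum (fun k => u k * x ^ k) (f x)) :
    HasFPowerSeriesOnBall f (FormalMultilinearSeries.ofScalars ℝ u) 0 1 := by
  refine ⟨?_, one_pos, ?_⟩
  · refine ENNReal.le_of_forall_nnreal_lt fun r hr => ?_
    refine FormalMultilinearSeries.le_radius_of_tendsto _ (l := 0) ?_
    have hr' : |(r : ℝ)| < 1 := by
      have h0 : (0:ℝ) ≤ (r : ℝ) := r.coe_nonneg
      rw [abs_of_nonneg h0]; exact_mod_cast hr
    have := (h r hr').summable.tendsto_atTop_zero.norm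
    simpa [FormalMultilinearSeries.ofScalars_norm, norm_mul] using this
  · intro y hy
    have hy' : |y| < 1 := by
      simpa [Metric.mem_eball, edist_dist, Real.dist_eq] using hy
    have := h y hy'
    simpa [FormalMultilinearSeries.ofScalars_apply_eq, mul_comm] using this

lemma aux_analytic (u : ℕ → ℝ) (f : ℝ → ℝ)
    (h : ∀ x : ℝ, |x| < 1 → HasSum (fun k => u k * x ^ k) (f x)) (x : ℝ) (hx : |x| < 1) :
    AnalyticAt ℝ f x := by
  refine (aux_fps u f h).analyticAt_of_mem ?_
  simpa [Metric.mem_eball, edist_dist, Real.dist_eq] using hx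

lemma aux_deriv (u : ℕ → ℝ) (f : ℝ → ℝ)
    (h : ∀ x : ℝ, |x| < 1 → HasSum (fun k => u k * x ^ k) (f x)) :
    ∀ x : ℝ, |x| < 1 → HasSum (fun k : ℕ => ((k + 1 : ℝ) * u (k + 1)) * x ^ k) (deriv f x) := by
  intro x hx
  have h1 := (aux_fps u f h).fderiv
  have h2 := h1.hasSum (y := x) (by
    simpa [Metric.mem_eball, edist_dist, Real.dist_eq] using hx)
  have h3 := h2.mapL (ContinuousLinearMap.apply ℝ ℝ (1:ℝ))
  simp only [zero_add, ContinuousLinearMap.apply_apply, fderiv_eq_deriv_mul, mul_one] at h3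
  refine aux_congr (fun k => ?_) h3
  rw [FormalMultilinearSeries.apply_eq_pow_smul_coeff]
  simp only [FunLike.coe_smul, Pi.smul_apply]
  rw [FormalMultilinearSeries.derivSeries_coeff_one, FormalMultilinearSeries.coeff_ofScalars]
  simp; ring

lemma aux_poch (x : ℝ) (k : ℕ) : poch x k = (ascPochhammer ℝ k).eval x := by
  induction k with
  | zero => simp [poch]
  | succ k ih => rw [poch, ih, ascPochhammer_succ_eval]

lemma aux_hasSum (a b c : ℝ) (hc : ∀ k : ℕ, c ≠ -(k : ℝ)) (x : ℝ) (hx : |x| < 1) :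
    HasSum (fun k => poch a k * poch b k / (poch c k * (k.factorial : ℝ)) * x ^ k)
      (hypF a b c x) := by
  have hr : 1 ≤ (ordinaryHypergeometricSeries ℝ a b c).radius := by
    by_cases ha : ∃ k : ℕ, a = -(k : ℝ)
    · obtain ⟨k, rfl⟩ := ha
      rw [ordinaryHypergeometric_radius_top_of_neg_nat₁]; exact le_top
    by_cases hb : ∃ k : ℕ, b = -(k : ℝ)
    · obtain ⟨k, rfl⟩ := hb
      rw [ordinaryHypergeometric_radius_top_of_neg_nat₂]; exact le_top
    push Not at ha hb
    rw [ordinaryHypergeometricSeries_radius_eq_one]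
    intro k
    refine ⟨fun e => ha k (by linarith), fun e => hb k (by linarith), fun e => hc k (by linarith)⟩
  refine Summable.hasSum ?_
  have hs := (ordinaryHypergeometricSeries ℝ a b c).summable (x := x) (by
    refine Metric.eball_subset_eball hr ?_
    simpa [Metric.mem_eball, edist_dist, Real.dist_eq] using hx)
  refine hs.congr fun k => ?_
  rw [ordinaryHypergeometricSeries_apply_eq]
  simp only [aux_poch, smul_eq_mul]
  rw [div_eq_mul_inv, mul_inv]; ring

lemma aux_poch_ne (c : ℝ) (hc : ∀ k : ℕ, c ≠ -(k : ℝ)) (k : ℕ) : poch c k ≠ 0 := by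
  induction k with
  | zero => simp [poch]
  | succ k ih => exact mul_ne_zero ih fun e => hc k (by linarith)

lemma aux_shift (u : ℕ → ℝ) (x S : ℝ) (h : HasSum (fun k : ℕ => ((k + 1 : ℝ) * u (k + 1)) * x ^ k) S) :
    HasSum (fun k : ℕ => ((k : ℝ) * u k) * x ^ k) (x * S) := by
  have := (h.mul_left x)
  rw [← hasSum_nat_add_iff' 1]
  simp only [Finset.range_one, Finset.sum_singleton, Nat.cast_zero, zero_mul, sub_zero]
  refine aux_congr (fun k => ?_) this
  push_cast; ring

lemma aux_ode0 (a b c : ℝ) (u : ℕ → ℝ) (f : ℝ → ℝ)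
    (h0 : ∀ x : ℝ, |x| < 1 → HasSum (fun k => u k * x ^ k) (f x))
    (hk : ∀ k : ℕ, u (k + 1) * ((c + k) * (k + 1)) = u k * ((a + k) * (b + k)))
    (x : ℝ) (hx : |x| < 1) :
    x * (1 - x) * deriv (deriv f) x + (c - (a + b + 1) * x) * deriv f x
      - a * b * f x = 0 := by
  have h1 := aux_deriv u _ h0
  have h2 := aux_deriv (fun k => ((k + 1 : ℝ) * u (k + 1))) _ h1
  have H0 := h0 x hx
  have H1 := h1 x hx
  have H2 := h2 x hx
  have H1x := aux_shift u x _ H1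
  have H2x := aux_shift (fun k => ((k + 1 : ℝ) * u (k + 1))) x _ H2
  have H2x' : HasSum (fun k : ℕ => ((k + 1 : ℝ) * (fun j : ℕ => ((j : ℝ) - 1) * u j) (k + 1)) * x ^ k)
      (x * deriv (deriv f) x) := by
    refine aux_congr (fun k => ?_) H2x
    push_cast; ring
  have H2xx := aux_shift (fun j : ℕ => ((j : ℝ) - 1) * u j) x _ H2x'
  have T := (((H2x.sub H2xx).add (H1.mul_left c)).sub (H1x.mul_left (a + b + 1))).sub
    (H0.mul_left (a * b))
  have T0 : HasSum (fun _ : ℕ => (0 : ℝ)) 0 := hasSum_zero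
  have E := T.unique (aux_congr (fun k => by linear_combination x ^ k * hk k) T0)
  linear_combination E

lemma aux_ode (a b c : ℝ) (hc : ∀ k : ℕ, c ≠ -(k : ℝ)) (x : ℝ) (hx : |x| < 1) :
    x * (1 - x) * deriv (deriv (hypF a b c)) x + (c - (a + b + 1) * x) * deriv (hypF a b c) x
      - a * b * hypF a b c x = 0 := by
  refine aux_ode0 a b c _ _ (aux_hasSum a b c hc) (fun k => ?_) x hx
  have p1 := aux_poch_ne c hc k
  have p2 : c + k ≠ 0 := fun e => hc k (by linarith)
  have p3 : (k.factorial : ℝ) ≠ 0 := by positivity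
  have p4 : (k : ℝ) + 1 ≠ 0 := by positivity
  simp only [poch, Nat.factorial_succ]
  push_cast
  field_simp

open Filter Topology in
lemma aux_unique (b β γ : ℝ) (hb : ∀ k : ℕ, 2 * b ≠ -(k : ℝ)) (D : ℝ → ℝ)
    (hD : AnalyticAt ℝ D 0) (h0 : D 0 = 0)
    (hode : ∀ᶠ s in 𝓝 (0 : ℝ), s * (1 - s ^ 2) * deriv (deriv D) s
      + (2 * b + β * s ^ 2) * deriv D s + γ * s * D s = 0) :
    ∀ᶠ s in 𝓝 (0 : ℝ), D s = 0 := by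
  by_contra hne
  rw [← hD.exists_eventuallyEq_pow_smul_nonzero_iff] at hne
  obtain ⟨m, g, hg, hg0, hm⟩ := hne
  simp only [sub_zero, smul_eq_mul] at hm
  obtain _ | j := m
  · have := hm.self_of_nhds
    simp [h0] at this
    exact hg0 this.symm
  have hga := hg.eventually_analyticAt
  have e1 : deriv D =ᶠ[𝓝 0] fun s => (j + 1 : ℝ) * s ^ j * g s + s ^ (j + 1) * deriv g s := by
    have : D =ᶠ[𝓝 0] fun s => s ^ (j + 1) * g s := hm
    refine this.deriv.trans ?_
    filter_upwards [hga] with s hs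
    have := ((hasDerivAt_pow (j + 1) s).mul hs.differentiableAt.hasDerivAt).deriv
    refine Eq.trans this ?_
    push_cast [Nat.add_sub_cancel]
    ring
  have e2 : deriv (deriv D) =ᶠ[𝓝 0] fun s =>
      (j + 1 : ℝ) * ((j * s ^ (j - 1)) * g s + s ^ j * deriv g s)
        + ((j + 1 : ℝ) * s ^ j * deriv g s + s ^ (j + 1) * deriv (deriv g) s) := by
    refine e1.deriv.trans ?_
    filter_upwards [hga] with s hs
    have d1 := hs.differentiableAt.hasDerivAt
    have d2 := hs.deriv.differentiableAt.hasDerivAt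
    have := ((((hasDerivAt_pow j s).const_mul (j + 1 : ℝ)).mul d1).add
      ((hasDerivAt_pow (j + 1) s).mul d2)).deriv
    refine Eq.trans this ?_
    push_cast [Nat.add_sub_cancel]
    ring
  set Φ : ℝ → ℝ := fun s => (1 - s ^ 2) * ((j + 1 : ℝ) * j * g s + 2 * (j + 1) * s * deriv g s
    + s ^ 2 * deriv (deriv g) s) + (2 * b + β * s ^ 2) * ((j + 1) * g s + s * deriv g s)
    + γ * s ^ 2 * g s with hΦ
  have hΦc : ContinuousAt Φ 0 := by
    have c1 := hg.continuousAt
    have c2 := hg.deriv.continuousAt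
    have c3 := hg.deriv.deriv.continuousAt
    rw [hΦ]
    fun_prop
  have hz : ∀ᶠ s in 𝓝[≠] (0 : ℝ), Φ s = 0 := by
    filter_upwards [nhdsWithin_le_nhds hode, nhdsWithin_le_nhds e1, nhdsWithin_le_nhds e2,
      nhdsWithin_le_nhds hm, self_mem_nhdsWithin] with s h1 h2 h3 h4 hs
    have hs : s ≠ 0 := hs
    have hp : s ^ j ≠ 0 := pow_ne_zero _ hs
    refine (mul_eq_zero.mp (?_ : s ^ j * Φ s = 0)).resolve_left hp
    rw [h2, h3, h4] at h1
    have hj : (j : ℝ) * s ^ (j - 1) * s = j * s ^ j := by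
      rcases j with _ | i
      · simp
      · simp [pow_succ]; ring
    simp only [hΦ]
    rw [← h1]
    linear_combination (-(1 - s ^ 2) * (j + 1) * g s) * hj
  have hlim : Φ 0 = 0 :=
    tendsto_nhds_unique (hΦc.tendsto.mono_left nhdsWithin_le_nhds)
      ((tendsto_congr' hz).mpr tendsto_const_nhds)
  have : (j + 1 : ℝ) * g 0 * (j + 2 * b) = 0 := by
    have h' := hlim
    simp only [hΦ] at h'
    linear_combination h'
  have hj1 : (j + 1 : ℝ) ≠ 0 := by positivity
  rcases mul_eq_zero.mp this with h | h
  · exact (mul_ne_zero hj1 hg0) h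
  · exact hb j (by linarith)

lemma aux_phi_lt (s : ℝ) (h1 : -1 / 10 < s) (h2 : s < 1) : |4 * s / (1 + s) ^ 2| < 1 := by
  have hp : 0 < (1 + s) ^ 2 := by apply pow_pos; linarith
  rw [abs_lt]
  constructor
  · rw [lt_div_iff₀ hp]; nlinarith
  · rw [div_lt_one hp]; nlinarith [mul_pos (sub_pos.2 h2) (sub_pos.2 h2)]

lemma aux_sq_lt (s : ℝ) (h1 : -1 / 10 < s) (h2 : s < 1) : |s ^ 2| < 1 := by
  rw [abs_lt]; constructor <;> nlinarith

open Filter Topology in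
lemma aux_main (a b : ℝ) (hb : ∀ k : ℕ, 2 * b ≠ -(k : ℝ)) (s : ℝ) (hs0 : 0 < s) (hs1 : s < 1) :
    hypF a b (2 * b) (4 * s / (1 + s) ^ 2) =
      (1 + s) ^ (2 * a) * hypF a (a - b + 1 / 2) (b + 1 / 2) (s ^ 2) := by
  have hb2 : ∀ k : ℕ, b + 1 / 2 ≠ -(k : ℝ) := fun k e => hb (2 * k + 1) (by push_cast; linarith)
  set F := hypF a b (2 * b) with hF
  set K := hypF a (a - b + 1 / 2) (b + 1 / 2) with hK
  have Fan : ∀ x, |x| < 1 → AnalyticAt ℝ F x := aux_analytic _ _ (aux_hasSum a b (2 * b) hb)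
  have Kan : ∀ x, |x| < 1 → AnalyticAt ℝ K x := aux_analytic _ _ (aux_hasSum _ _ _ hb2)
  have Fode := aux_ode a b (2 * b) hb
  have Kode := aux_ode a (a - b + 1 / 2) (b + 1 / 2) hb2
  rw [← hF] at Fode
  rw [← hK] at Kode
  set U : Set ℝ := Set.Ioo (-1 / 10) 1 with hU
  have hUo : IsOpen U := isOpen_Ioo
  set φ : ℝ → ℝ := fun s => 4 * s / (1 + s) ^ 2 with hφ
  set E : ℝ → ℝ := fun s => (1 + s) ^ (-(2 * a)) with hE
  have hpos : ∀ t ∈ U, 0 < 1 + t := fun t ht => by have := ht.1; linarith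
  have dφ : ∀ t ∈ U, HasDerivAt φ (4 * (1 - t) / (1 + t) ^ 3) t := by
    intro t ht
    have h := (hpos t ht).ne'
    have := ((hasDerivAt_id t).const_mul 4).div (((hasDerivAt_id t).const_add 1).pow 2)
      (pow_ne_zero 2 h)
    refine this.congr_deriv ?_
    simp only [id, Pi.pow_apply, Pi.add_apply, Pi.mul_apply]
    push_cast
    field_simp
    ring
  have dφ1 : ∀ t ∈ U, HasDerivAt (fun t => 4 * (1 - t) / (1 + t) ^ 3)
      ((8 * t - 16) / (1 + t) ^ 4) t := by
    intro t ht
    have h := (hpos t ht).ne'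
    have := (((hasDerivAt_id t).const_sub 1).const_mul 4).div (((hasDerivAt_id t).const_add 1).pow 3)
      (pow_ne_zero 3 h)
    refine this.congr_deriv ?_
    simp only [id, Pi.pow_apply, Pi.add_apply, Pi.mul_apply]
    push_cast
    field_simp
    ring
  have dE : ∀ t ∈ U, HasDerivAt E (E t * (-(2 * a) / (1 + t))) t := by
    intro t ht
    have h := hpos t ht
    have := ((hasDerivAt_id t).const_add 1).rpow_const (p := -(2 * a)) (Or.inl h.ne')
    refine this.congr_deriv ?_
    simp only [id, hE]
    rw [Real.rpow_sub_one h.ne']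
    field_simp
  have dl : ∀ t ∈ U, HasDerivAt (fun t => -(2 * a) / (1 + t)) (2 * a / (1 + t) ^ 2) t := by
    intro t ht
    have h := (hpos t ht).ne'
    have := (hasDerivAt_const t (-(2 * a))).div ((hasDerivAt_id t).const_add 1) h
    refine this.congr_deriv ?_
    simp
  have dF : ∀ t ∈ U, HasDerivAt (fun t => F (φ t))
      (deriv F (φ t) * (4 * (1 - t) / (1 + t) ^ 3)) t := fun t ht =>
    HasDerivAt.comp (h₂ := F) (h := φ) t
      (Fan _ (aux_phi_lt t ht.1 ht.2)).differentiableAt.hasDerivAt (dφ t ht)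
  have dF1 : ∀ t ∈ U, HasDerivAt (fun t => deriv F (φ t))
      (deriv (deriv F) (φ t) * (4 * (1 - t) / (1 + t) ^ 3)) t := fun t ht =>
    HasDerivAt.comp (h₂ := deriv F) (h := φ) t
      (Fan _ (aux_phi_lt t ht.1 ht.2)).deriv.differentiableAt.hasDerivAt (dφ t ht)
  have dsq : ∀ t : ℝ, HasDerivAt (fun t : ℝ => t ^ 2) (2 * t) t := fun t => by
    simpa using hasDerivAt_pow 2 t
  have dK : ∀ t ∈ U, HasDerivAt (fun t => K (t ^ 2)) (deriv K (t ^ 2) * (2 * t)) t := fun t ht =>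
    HasDerivAt.comp (h₂ := K) (h := fun t : ℝ => t ^ 2) t
      (Kan _ (aux_sq_lt t ht.1 ht.2)).differentiableAt.hasDerivAt (dsq t)
  have dK1 : ∀ t ∈ U, HasDerivAt (fun t => deriv K (t ^ 2))
      (deriv (deriv K) (t ^ 2) * (2 * t)) t := fun t ht =>
    HasDerivAt.comp (h₂ := deriv K) (h := fun t : ℝ => t ^ 2) t
      (Kan _ (aux_sq_lt t ht.1 ht.2)).deriv.differentiableAt.hasDerivAt (dsq t)
  set D : ℝ → ℝ := fun t => E t * F (φ t) - K (t ^ 2) with hD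
  have dD : ∀ t ∈ U, deriv D t =
      (E t * (-(2 * a) / (1 + t)) * F (φ t) + E t * (deriv F (φ t) * (4 * (1 - t) / (1 + t) ^ 3)))
      - deriv K (t ^ 2) * (2 * t) := fun t ht =>
    (((dE t ht).mul (dF t ht)).sub (dK t ht)).deriv
  have dD1 : ∀ t ∈ U, deriv (deriv D) t =
      ((E t * (-(2 * a) / (1 + t)) * (-(2 * a) / (1 + t)) + E t * (2 * a / (1 + t) ^ 2)) * F (φ t)
        + E t * (-(2 * a) / (1 + t)) * (deriv F (φ t) * (4 * (1 - t) / (1 + t) ^ 3))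
      + (E t * (-(2 * a) / (1 + t)) * (deriv F (φ t) * (4 * (1 - t) / (1 + t) ^ 3))
        + E t * (deriv (deriv F) (φ t) * (4 * (1 - t) / (1 + t) ^ 3) * (4 * (1 - t) / (1 + t) ^ 3)
          + deriv F (φ t) * ((8 * t - 16) / (1 + t) ^ 4))))
      - (deriv (deriv K) (t ^ 2) * (2 * t) * (2 * t) + deriv K (t ^ 2) * 2) := by
    intro t ht
    have ev := (Filter.eventuallyEq_of_mem (hUo.mem_nhds ht) dD).deriv_eq
    rw [ev]
    have d2 : HasDerivAt (fun t : ℝ => 2 * t) 2 t := by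
      simpa using (hasDerivAt_id t).const_mul (2 : ℝ)
    exact (((((dE t ht).mul (dl t ht)).mul (dF t ht)).add
      ((dE t ht).mul ((dF1 t ht).mul (dφ1 t ht)))).sub ((dK1 t ht).mul d2)).deriv
  have ode : ∀ t ∈ U, t * (1 - t ^ 2) * deriv (deriv D) t
      + (2 * b + (-(4 * a - 2 * b + 2)) * t ^ 2) * deriv D t
      + (-(4 * a * (a - b + 1 / 2))) * t * D t = 0 := by
    intro t ht
    have h := (hpos t ht).ne'
    rw [dD t ht, dD1 t ht]
    have f := Fode (φ t) (aux_phi_lt t ht.1 ht.2)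
    have k := Kode (t ^ 2) (aux_sq_lt t ht.1 ht.2)
    simp only [hD]
    generalize deriv (deriv F) (φ t) = F2 at *
    generalize deriv F (φ t) = F1 at *
    generalize F (φ t) = F0 at *
    generalize E t = e at *
    simp only [hφ] at f
    generalize deriv (deriv K) (t ^ 2) = K2 at *
    generalize deriv K (t ^ 2) = K1 at *
    generalize K (t ^ 2) = K0 at *
    have f' : ∀ z, z = 0 → e * (4 * (1 - t) / (1 + t)) * z = 0 := fun z hz => by rw [hz, mul_zero]
    have f2 := f' _ f
    have k2 : ∀ z : ℝ, z = 0 → 4 * t * z = 0 := fun z hz => by rw [hz, mul_zero]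
    have k3 := k2 _ k
    refine Eq.trans ?_ (show _ - _ = (0 : ℝ) from (congrArg₂ (fun x y : ℝ => x - y) f2 k3).trans
      (sub_zero 0))
    clear f' f2 k2 k3 f k
    field_simp
    ring
  have Dan : AnalyticOnNhd ℝ D U := by
    intro t ht
    have h := hpos t ht
    have a1 : AnalyticAt ℝ φ t := by
      refine AnalyticAt.div (by fun_prop) (by fun_prop) (pow_ne_zero 2 h.ne')
    have a2 : AnalyticAt ℝ E t := by
      have l : AnalyticAt ℝ (fun t : ℝ => Real.exp (Real.log (1 + t) * (-(2 * a)))) t :=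
        ((AnalyticAt.log (by fun_prop) h).mul (by fun_prop)).rexp
      refine l.congr ?_
      filter_upwards [hUo.mem_nhds ht] with r hr
      simp only [hE]
      rw [Real.rpow_def_of_pos (hpos r hr)]
    have a3 : AnalyticAt ℝ (fun t => F (φ t)) t :=
      AnalyticAt.comp (f := φ) (Fan _ (aux_phi_lt t ht.1 ht.2)) a1
    have a4 : AnalyticAt ℝ (fun t => K (t ^ 2)) t :=
      AnalyticAt.comp (f := fun t : ℝ => t ^ 2) (Kan _ (aux_sq_lt t ht.1 ht.2)) (by fun_prop)
    exact (a2.mul a3).sub a4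
  have hU0 : (0 : ℝ) ∈ U := by constructor <;> norm_num
  have one : ∀ a b c : ℝ, hypF a b c 0 = 1 := by
    intro a b c
    rw [hypF, tsum_eq_single 0]
    · simp [poch]
    · intro k hk; simp [hk]
  have hD0 : D 0 = 0 := by
    simp [hD, hE, hφ, hF, hK, one]
  have loc := aux_unique b _ _ hb D (Dan 0 hU0) hD0
    (Filter.eventually_of_mem (hUo.mem_nhds hU0) ode)
  have glob := Dan.eqOn_zero_of_preconnected_of_eventuallyEq_zero
    (isPreconnected_Ioo) hU0 loc
  have hsU : s ∈ U := ⟨by linarith, hs1⟩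
  have := glob hsU
  simp only [hD, hE, hφ, Pi.zero_apply] at this
  have hK' : K (s ^ 2) = (1 + s) ^ (-(2 * a)) * F (4 * s / (1 + s) ^ 2) := by linarith
  rw [hK', ← mul_assoc, ← Real.rpow_add (hpos s hsU)]
  simp

theorem statement10 (n : ℕ) (hn : 2 ≤ n) (lam : ℝ)
    (hc1 : ∀ k : ℕ, 2 * lam - (n : ℝ) + 2 ≠ -(k : ℝ))
    (hc2 : ∀ k : ℕ, lam - ((n : ℝ) - 3) / 2 ≠ -(k : ℝ)) :
    ∀ s : ℝ, 0 < s → s < 1 →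
      hypF lam (lam - (n : ℝ) / 2 + 1) (2 * lam - (n : ℝ) + 2) (4 * s / (1 + s) ^ 2) =
        (1 + s) ^ (2 * lam) *
          hypF lam (((n : ℝ) - 1) / 2) (lam - ((n : ℝ) - 3) / 2) (s ^ 2) := by
  intro s hs0 hs1
  have h := aux_main lam (lam - (n : ℝ) / 2 + 1)
    (fun k e => hc1 k (by linarith)) s hs0 hs1
  have e1 : 2 * (lam - (n : ℝ) / 2 + 1) = 2 * lam - (n : ℝ) + 2 := by ring
  have e2 : lam - (lam - (n : ℝ) / 2 + 1) + 1 / 2 = ((n : ℝ) - 1) / 2 := by ring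
  have e3 : lam - (n : ℝ) / 2 + 1 + 1 / 2 = lam - ((n : ℝ) - 3) / 2 := by ring
  rw [e1, e2, e3] at h
  exact h
end

section
/- Let n ≥ 2 be an integer and λ a real number such that none of the numbers λ, λ − n/2 + 1, n/2 − λ, n − λ − 1, n − 2λ − 1, 2λ − n + 1 is a nonpositive integer, and such that λ − (n−3)/2 and (n+1)/2 − λ are not nonpositive integers. Set A = Γ(n/2)Γ(n − 2λ − 1)/(Γ(n/2 − λ)Γ(n − λ − 1)) and B = Γ(n/2)Γ(2λ − n + 1)/(Γ(λ)Γ(λ − n/2 + 1)). Then for every real s with 0 < s < 1, putting r = (1 − s)/(1 + s) (so that 0 < r < 1): (1 − r²)^λ · F(λ, λ − n/2 + 1; n/2; r²) = A · (4s)^λ · F(λ, (n−1)/2; λ − (n−3)/2; s²) + B · (4s)^{n−1−λ} · F((n−1)/2, n − λ − 1; (n+1)/2 − λ; s²). (This is the final identity in the proof of Proposition 4.1, expressing the radial hyperbolic eigenfunction in the coordinate s = (1−r)/(1+r).) -/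
open Filter Topology

/-- polynomially bounded coefficient sequences -/
def PB (a : ℕ → ℝ) : Prop := ∃ C : ℝ, ∃ m : ℕ, ∀ k : ℕ, |a k| ≤ C * ((k : ℝ) + 1) ^ m

/-- power series -/
noncomputable def ps (a : ℕ → ℝ) (x : ℝ) : ℝ := ∑' k : ℕ, a k * x ^ k

/-- derivative coefficients -/
def dc (a : ℕ → ℝ) (k : ℕ) : ℝ := ((k : ℝ) + 1) * a (k + 1)

lemma hs_congr {f g : ℕ → ℝ} {s : ℝ} (h : HasSum f s) (e : ∀ k, g k = f k) : HasSum g s := by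
  have : g = f := funext e
  rw [this]; exact h

lemma summable_poly_geo (m : ℕ) {x : ℝ} (hx0 : 0 ≤ x) (hx : x < 1) :
    Summable (fun k : ℕ => ((k : ℝ) + 1) ^ m * x ^ k) := by
  rcases hx0.eq_or_lt with rfl | h0
  · apply summable_of_ne_finset_zero (s := {0})
    intro k hk
    have : k ≠ 0 := by simpa using hk
    simp [this]
  · have h := summable_pow_mul_geometric_of_norm_lt_one (R := ℝ) m (r := x)
      (by rw [Real.norm_eq_abs, abs_of_pos h0]; exact hx)
    have h2 := ((summable_nat_add_iff 1).2 h).mul_left (x⁻¹)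
    refine h2.congr fun k => ?_
    push_cast
    field_simp
    ring

lemma PB.summable_abs {a : ℕ → ℝ} (ha : PB a) {x : ℝ} (hx0 : 0 ≤ x) (hx : x < 1) :
    Summable (fun k : ℕ => |a k| * x ^ k) := by
  obtain ⟨C, m, h⟩ := ha
  refine Summable.of_nonneg_of_le (fun k => by positivity) (fun k => ?_)
    ((summable_poly_geo m hx0 hx).mul_left C)
  rw [← mul_assoc]
  exact mul_le_mul_of_nonneg_right (h k) (by positivity)

lemma PB.summable {a : ℕ → ℝ} (ha : PB a) {x : ℝ} (hx : |x| < 1) :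
    Summable (fun k : ℕ => a k * x ^ k) := by
  apply Summable.of_norm
  refine (ha.summable_abs (abs_nonneg x) hx).congr fun k => ?_
  simp

lemma PB.dc {a : ℕ → ℝ} (ha : PB a) : PB (dc a) := by
  obtain ⟨C, m, h⟩ := ha
  have hC : 0 ≤ C := by simpa using (abs_nonneg _).trans (h 0)
  refine ⟨C * 2 ^ m, m + 1, fun k => ?_⟩
  unfold _root_.dc
  rw [abs_mul, abs_of_nonneg (by positivity : (0:ℝ) ≤ (k:ℝ) + 1)]
  have h1 := h (k + 1)
  have h2 : (((k + 1 : ℕ) : ℝ) + 1) ^ m ≤ (2 * ((k : ℝ) + 1)) ^ m := by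
    gcongr
    push_cast
    have : (0:ℝ) ≤ k := by positivity
    linarith
  calc ((k : ℝ) + 1) * |a (k + 1)| ≤ ((k : ℝ) + 1) * (C * (2 * ((k : ℝ) + 1)) ^ m) := by
        gcongr
        exact h1.trans (by gcongr)
    _ = _ := by rw [mul_pow, pow_succ]; ring

lemma PB.hasDerivAt {a : ℕ → ℝ} (ha : PB a) {x : ℝ} (hx : |x| < 1) :
    HasDerivAt (ps a) (ps (_root_.dc a) x) x := by
  obtain ⟨R, hxR, hR⟩ := exists_between hx
  have hR0 : 0 < R := (abs_nonneg x).trans_lt hxR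
  have key : HasDerivAt (fun z => ∑' k : ℕ, a k * z ^ k)
      (∑' k : ℕ, a k * ((k : ℝ) * x ^ (k - 1))) x := by
    refine hasDerivAt_tsum_of_isPreconnected (g := fun k z => a k * z ^ k)
      (g' := fun k z => a k * ((k : ℝ) * z ^ (k - 1))) (t := Metric.ball (0:ℝ) R) (y₀ := (0:ℝ))
      (u := fun k => |a k| * ((k : ℝ) * R ^ (k - 1)))
      ?_ Metric.isOpen_ball (convex_ball _ _).isPreconnected ?_ ?_ ?_ ?_ ?_
    · have h := ha.dc.summable_abs hR0.le hR
      rw [← summable_nat_add_iff 1]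
      refine h.congr fun k => ?_
      simp only [_root_.dc, abs_mul, Nat.add_sub_cancel]
      rw [abs_of_nonneg (by positivity : (0:ℝ) ≤ (k:ℝ) + 1)]
      push_cast
      ring
    · intro k y _
      exact (hasDerivAt_pow k y).const_mul _
    · intro k y hy
      have hy' : |y| ≤ R := by simpa using (Metric.mem_ball.1 hy).le
      rw [Real.norm_eq_abs, abs_mul, abs_mul, abs_pow, Nat.abs_cast]
      gcongr
    · simpa using hR0
    · exact ha.summable (by simp)
    · simpa using hxR
  have e : (∑' k : ℕ, a k * ((k : ℝ) * x ^ (k - 1))) = ps (_root_.dc a) x := by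
    rw [tsum_eq_zero_add']
    · simp only [ps, _root_.dc]
      simp
      congr 1
      ext k
      ring
    · refine (ha.dc.summable hx).congr fun k => ?_
      simp [_root_.dc]
      ring
  rw [← e]
  exact key

lemma PB.mul_ps_dc {a : ℕ → ℝ} (ha : PB a) {x : ℝ} (hx : |x| < 1) :
    HasSum (fun k : ℕ => (k : ℝ) * a k * x ^ k) (x * ps (_root_.dc a) x) := by
  rw [← hasSum_nat_add_iff' 1]
  simp only [Finset.sum_range_one, Nat.cast_zero, zero_mul, sub_zero]
  have := ((ha.dc.summable hx).hasSum).mul_left x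
  refine hs_congr this fun k => ?_
  simp only [_root_.dc]
  push_cast
  ring

noncomputable def hc (a b c : ℝ) (k : ℕ) : ℝ :=
  poch a k * poch b k / (poch c k * (k.factorial : ℝ))

lemma hypF_eq (a b c x : ℝ) : hypF a b c x = ps (hc a b c) x := rfl

lemma poch_ne {c : ℝ} (h : ∀ k : ℕ, c ≠ -(k : ℝ)) (k : ℕ) : poch c k ≠ 0 := by
  induction k with
  | zero => simp [poch]
  | succ k ih =>
    simp only [poch]
    exact mul_ne_zero ih (fun h' => h k (by linarith))

lemma hc_succ {a b c : ℝ} (h : ∀ k : ℕ, c ≠ -(k : ℝ)) (k : ℕ) :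
    ((k : ℝ) + 1) * (c + k) * hc a b c (k + 1) = (a + k) * (b + k) * hc a b c k := by
  have h1 := poch_ne h k
  have h2 : c + k ≠ 0 := fun h' => h k (by linarith)
  have h3 : (k.factorial : ℝ) ≠ 0 := by positivity
  have h4 : (k : ℝ) + 1 ≠ 0 := by positivity
  simp only [hc, poch, Nat.factorial_succ]
  push_cast
  field_simp

lemma hc_ode {a b c : ℝ} (h : ∀ k : ℕ, c ≠ -(k : ℝ)) (hp : PB (hc a b c)) {x : ℝ}
    (hx : |x| < 1) :
    x * (1 - x) * ps (dc (dc (hc a b c))) x + (c - (a + b + 1) * x) * ps (dc (hc a b c)) x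
      - a * b * ps (hc a b c) x = 0 := by
  set f := hc a b c with hf
  have s0 := (hp.summable hx).hasSum
  have s1 := (hp.dc.summable hx).hasSum
  have t1 := hp.mul_ps_dc hx
  have t2 := hp.dc.mul_ps_dc hx
  have t3 : HasSum (fun k : ℕ => (k : ℝ) * ((k : ℝ) - 1) * f k * x ^ k)
      (x * (x * ps (dc (dc f)) x)) := by
    rw [← hasSum_nat_add_iff' 1]
    simp only [Finset.sum_range_one, Nat.cast_zero, zero_mul, sub_zero]
    refine hs_congr (t2.mul_left x) fun k => ?_
    simp only [dc]
    push_cast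
    ring
  have tot := (((t2.sub t3).add (s1.mul_left c)).sub (t1.mul_left (a + b + 1))).sub
    (s0.mul_left (a * b))
  have z : HasSum (fun _ : ℕ => (0 : ℝ)) 0 := hasSum_zero
  have e := tot.unique (by
    refine hs_congr z fun k => ?_
    have := hc_succ (a := a) (b := b) h k
    rw [← hf] at this
    simp only [dc]
    linear_combination x ^ k * this)
  simp only [ps] at e ⊢
  linear_combination e

/-- model coefficients -/
noncomputable def mb (ν : ℝ) (k : ℕ) : ℝ := ((k - 1 : ℕ) : ℝ) ^ ν / (k : ℝ)

lemma mb_nonneg (ν : ℝ) (k : ℕ) : 0 ≤ mb ν k := by unfold mb; positivity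

lemma mb_le (ν : ℝ) (k : ℕ) : mb ν k ≤ ((k : ℝ) + 1) ^ ⌈|ν|⌉₊ := by
  unfold mb
  have hR : (1 : ℝ) ≤ ((k : ℝ) + 1) ^ ⌈|ν|⌉₊ := one_le_pow₀ (by
    have : (0 : ℝ) ≤ k := by positivity
    linarith)
  rcases Nat.lt_or_ge k 2 with hk | hk
  · interval_cases k
    · simp
    · rcases eq_or_ne ν 0 with rfl | h
      · simp
      · simp [Real.zero_rpow h]
  · have h1 : (1 : ℝ) ≤ ((k - 1 : ℕ) : ℝ) := by
      have : 1 ≤ k - 1 := by omega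
      exact_mod_cast this
    have h2 : ((k - 1 : ℕ) : ℝ) ≤ (k : ℝ) + 1 := by
      have : k - 1 ≤ k + 1 := by omega
      exact_mod_cast this
    have h3 : (1 : ℝ) ≤ (k : ℝ) := by
      have : 1 ≤ k := by omega
      exact_mod_cast this
    calc ((k - 1 : ℕ) : ℝ) ^ ν / (k : ℝ) ≤ ((k - 1 : ℕ) : ℝ) ^ ν :=
          div_le_self (by positivity) h3
      _ ≤ ((k - 1 : ℕ) : ℝ) ^ ((⌈|ν|⌉₊ : ℕ) : ℝ) :=
          Real.rpow_le_rpow_of_exponent_le h1 ((le_abs_self ν).trans (Nat.le_ceil _))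
      _ = ((k - 1 : ℕ) : ℝ) ^ ⌈|ν|⌉₊ := Real.rpow_natCast _ _
      _ ≤ _ := by gcongr

lemma mb_PB (ν : ℝ) : PB (mb ν) := by
  refine ⟨1, ⌈|ν|⌉₊, fun k => ?_⟩
  rw [abs_of_nonneg (mb_nonneg ν k), one_mul]
  exact mb_le ν k

lemma mb_not_summable {ν : ℝ} (hν : 0 ≤ ν) : ¬ Summable (mb ν) := by
  intro h
  have h2 := (summable_nat_add_iff 2).2 h
  apply Real.not_summable_natCast_inv
  rw [← summable_nat_add_iff 2]
  refine Summable.of_nonneg_of_le (fun k => by positivity) (fun k => ?_) h2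
  unfold mb
  rw [inv_eq_one_div]
  gcongr
  apply Real.one_le_rpow _ hν
  have : 1 ≤ k + 2 - 1 := by omega
  exact_mod_cast this

lemma ps_tendsto_atTop {b : ℕ → ℝ} (hb : PB b) (h0 : ∀ k, 0 ≤ b k) (hs : ¬ Summable b) :
    Tendsto (ps b) (𝓝[<] 1) atTop := by
  rw [tendsto_atTop]
  intro M
  have h1 := (not_summable_iff_tendsto_nat_atTop_of_nonneg h0).1 hs
  obtain ⟨N, hN⟩ := (h1.eventually (eventually_gt_atTop M)).exists
  have hc : Tendsto (fun x : ℝ => ∑ k ∈ Finset.range N, b k * x ^ k) (𝓝[<] 1)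
      (𝓝 (∑ k ∈ Finset.range N, b k)) := by
    have : Continuous (fun x : ℝ => ∑ k ∈ Finset.range N, b k * x ^ k) := by fun_prop
    have := this.tendsto 1
    simp only [one_pow, mul_one] at this
    exact this.mono_left nhdsWithin_le_nhds
  have h01 : ∀ᶠ x : ℝ in 𝓝[<] 1, x ∈ Set.Ioo (0 : ℝ) 1 := Ioo_mem_nhdsLT (by norm_num)
  filter_upwards [hc.eventually (eventually_gt_nhds hN), h01] with x hx hx1
  refine hx.le.trans ?_
  exact (hb.summable (by rw [abs_of_pos hx1.1]; exact hx1.2)).sum_le_tsum _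
    (fun k _ => mul_nonneg (h0 k) (pow_nonneg hx1.1.le _))

lemma ps_ratio {a b : ℕ → ℝ} {L : ℝ} (ha : PB a) (hb : PB b) (h0 : ∀ k, 0 ≤ b k)
    (hs : ¬ Summable b)
    (hab : ∀ ε > 0, ∃ K : ℕ, ∀ k ≥ K, |a k - L * b k| ≤ ε * b k) :
    Tendsto (fun x => ps a x / ps b x) (𝓝[<] 1) (𝓝 L) := by
  have hdiv := ps_tendsto_atTop hb h0 hs
  rw [Metric.tendsto_nhds]
  intro ε hε
  obtain ⟨K, hK⟩ := hab (ε / 2) (by positivity)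
  set C := ∑ k ∈ Finset.range K, |a k - L * b k| with hC
  have hC0 : 0 ≤ C := Finset.sum_nonneg fun _ _ => abs_nonneg _
  have h01 : ∀ᶠ x : ℝ in 𝓝[<] 1, x ∈ Set.Ioo (0 : ℝ) 1 := Ioo_mem_nhdsLT (by norm_num)
  filter_upwards [hdiv.eventually (eventually_gt_atTop (C / (ε / 2))), h01] with x hx hx1
  have hxa : |x| < 1 := by rw [abs_of_pos hx1.1]; exact hx1.2
  have hpos : 0 < ps b x := lt_of_le_of_lt (by positivity) hx
  have sa := ha.summable hxa
  have sb := hb.summable hxa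
  have sd : Summable (fun k => (a k - L * b k) * x ^ k) := by
    refine (sa.sub (sb.mul_left L)).congr fun k => by ring
  have e : ps a x - L * ps b x = ∑' k, (a k - L * b k) * x ^ k := by
    simp only [ps]
    rw [← tsum_mul_left, ← sa.tsum_sub (sb.mul_left L)]
    congr 1
    ext k
    ring
  have sK : HasSum (fun k => if k < K then |a k - L * b k| else 0) C := by
    have : HasSum (fun k => if k < K then |a k - L * b k| else 0)
        (∑ k ∈ Finset.range K, if k < K then |a k - L * b k| else 0) :=
      hasSum_sum_of_ne_finset_zero (by
        intro k hk
        have : ¬ k < K := by simpa using hk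
        simp [this])
    convert this using 1
    rw [hC]
    apply Finset.sum_congr rfl
    intro k hk
    have : k < K := by simpa using hk
    simp [this]
  have sB : HasSum (fun k => ε / 2 * (b k * x ^ k)) (ε / 2 * ps b x) := sb.hasSum.mul_left _
  have bd : |∑' k, (a k - L * b k) * x ^ k| ≤ C + ε / 2 * ps b x := by
    rw [← Real.norm_eq_abs]
    refine tsum_of_norm_bounded (sK.add sB) fun k => ?_
    have hxk : 0 ≤ x ^ k := pow_nonneg hx1.1.le _
    have hxk1 : x ^ k ≤ 1 := pow_le_one₀ hx1.1.le hx1.2.le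
    rw [Real.norm_eq_abs, abs_mul, abs_of_nonneg hxk]
    by_cases hk : k < K
    · simp only [hk, if_true]
      have : 0 ≤ ε / 2 * (b k * x ^ k) := by have := h0 k; positivity
      have : |a k - L * b k| * x ^ k ≤ |a k - L * b k| * 1 := by gcongr
      linarith
    · simp only [hk, if_false, zero_add]
      have := mul_le_mul_of_nonneg_right (hK k (by omega)) hxk
      linarith
  rw [Real.dist_eq]
  have : ps a x / ps b x - L = (ps a x - L * ps b x) / ps b x := by
    field_simp
  rw [this, abs_div, abs_of_pos hpos, div_lt_iff₀ hpos, e]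
  rw [div_lt_iff₀ (by positivity)] at hx
  linarith

lemma poch_prod (x : ℝ) (k : ℕ) : poch x k = ∏ j ∈ Finset.range k, (x + (j : ℝ)) := by
  induction k with
  | zero => simp [poch]
  | succ k ih => rw [Finset.prod_range_succ, ← ih]; rfl

lemma hc_eq {a b c : ℝ} (ha : ∀ k : ℕ, a ≠ -(k : ℝ)) (hb : ∀ k : ℕ, b ≠ -(k : ℝ))
    (hcc : ∀ k : ℕ, c ≠ -(k : ℝ)) (k : ℕ) (hk : 1 ≤ k) :
    hc a b c (k + 1) = Real.GammaSeq c k / (Real.GammaSeq a k * Real.GammaSeq b k)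
      * mb (a + b - c) (k + 1) := by
  have hk0 : (0 : ℝ) < k := by exact_mod_cast hk
  have p1 := poch_ne ha (k + 1)
  have p2 := poch_ne hb (k + 1)
  have p3 := poch_ne hcc (k + 1)
  simp only [Real.GammaSeq, ← poch_prod, hc, mb, Nat.add_sub_cancel]
  rw [Real.rpow_sub hk0, Real.rpow_add hk0, Nat.factorial_succ]
  have q1 : (k : ℝ) ^ a ≠ 0 := (Real.rpow_pos_of_pos hk0 _).ne'
  have q2 : (k : ℝ) ^ b ≠ 0 := (Real.rpow_pos_of_pos hk0 _).ne'
  have q3 : (k : ℝ) ^ c ≠ 0 := (Real.rpow_pos_of_pos hk0 _).ne'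
  have q4 : (k.factorial : ℝ) ≠ 0 := by positivity
  have q5 : (k : ℝ) + 1 ≠ 0 := by positivity
  push_cast
  field_simp

lemma hc_lim {a b c : ℝ} (ha : ∀ k : ℕ, a ≠ -(k : ℝ)) (hb : ∀ k : ℕ, b ≠ -(k : ℝ)) :
    Tendsto (fun k => Real.GammaSeq c k / (Real.GammaSeq a k * Real.GammaSeq b k)) atTop
      (𝓝 (Real.Gamma c / (Real.Gamma a * Real.Gamma b))) :=
  (Real.GammaSeq_tendsto_Gamma c).div
    ((Real.GammaSeq_tendsto_Gamma a).mul (Real.GammaSeq_tendsto_Gamma b))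
    (mul_ne_zero (Real.Gamma_ne_zero ha) (Real.Gamma_ne_zero hb))

lemma hc_PB {a b c : ℝ} (ha : ∀ k : ℕ, a ≠ -(k : ℝ)) (hb : ∀ k : ℕ, b ≠ -(k : ℝ))
    (hcc : ∀ k : ℕ, c ≠ -(k : ℝ)) : PB (hc a b c) := by
  have hl := (hc_lim (c := c) ha hb).abs
  obtain ⟨Q, hQ⟩ := hl.bddAbove_range
  have hQ' : ∀ k, |Real.GammaSeq c k / (Real.GammaSeq a k * Real.GammaSeq b k)| ≤ Q :=
    fun k => hQ ⟨k, rfl⟩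
  have hQ0 : 0 ≤ Q := (abs_nonneg _).trans (hQ' 0)
  refine ⟨Q + |hc a b c 0| + |hc a b c 1|, ⌈|a + b - c|⌉₊, fun k => ?_⟩
  have hR : (1 : ℝ) ≤ ((k : ℝ) + 1) ^ ⌈|a + b - c|⌉₊ := one_le_pow₀ (by
    have : (0 : ℝ) ≤ k := by positivity
    linarith)
  have n0 := abs_nonneg (hc a b c 0)
  have n1 := abs_nonneg (hc a b c 1)
  match k, hR with
  | 0, hR => nlinarith
  | 1, hR => nlinarith
  | k + 2, hR =>
    rw [hc_eq ha hb hcc (k + 1) (by omega), abs_mul, abs_of_nonneg (mb_nonneg _ _)]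
    have h1 := hQ' (k + 1)
    have h2 := mb_le (a + b - c) (k + 1 + 1)
    have h3 := mb_nonneg (a + b - c) (k + 1 + 1)
    refine (mul_le_mul h1 h2 h3 hQ0).trans ?_
    have : (0:ℝ) ≤ (((k + 1 + 1 : ℕ) : ℝ) + 1) ^ ⌈|a + b - c|⌉₊ := by positivity
    show _ ≤ (Q + |hc a b c 0| + |hc a b c 1|) * (((k + 1 + 1 : ℕ) : ℝ) + 1) ^ ⌈|a + b - c|⌉₊
    gcongr
    linarith

lemma hc_asymp {a b c ν : ℝ} (ha : ∀ k : ℕ, a ≠ -(k : ℝ)) (hb : ∀ k : ℕ, b ≠ -(k : ℝ))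
    (hcc : ∀ k : ℕ, c ≠ -(k : ℝ)) (hν : a + b - c = ν) (h0 : 0 ≤ ν) :
    Tendsto (fun x => hypF a b c x / ps (mb ν) x) (𝓝[<] 1)
      (𝓝 (Real.Gamma c / (Real.Gamma a * Real.Gamma b))) := by
  subst hν
  refine ps_ratio (a := hc a b c) (hc_PB ha hb hcc) (mb_PB _) (mb_nonneg _) (mb_not_summable h0) ?_
  intro ε hε
  obtain ⟨K, hK⟩ := Metric.tendsto_atTop.1 (hc_lim (c := c) ha hb) ε hε
  refine ⟨K + 2, fun k hk => ?_⟩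
  obtain ⟨j, rfl⟩ : ∃ j, k = j + 1 := ⟨k - 1, by omega⟩
  have h1 := hK j (by omega)
  rw [Real.dist_eq] at h1
  rw [hc_eq ha hb hcc j (by omega), ← sub_mul, abs_mul, abs_of_nonneg (mb_nonneg _ _)]
  exact mul_le_mul_of_nonneg_right h1.le (mb_nonneg _ _)

lemma pos_ne {a : ℝ} (h : 0 < a) (k : ℕ) : a ≠ -(k : ℝ) := by
  have : (0 : ℝ) ≤ k := by positivity
  intro h'
  linarith

lemma ps_zero (a : ℕ → ℝ) : ps a 0 = a 0 := by
  simp only [ps]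
  rw [tsum_eq_single 0]
  · simp
  · intro k hk; simp [hk]

lemma hypF_zero (a b c : ℝ) : hypF a b c 0 = 1 := by
  rw [hypF_eq, ps_zero]; simp [hc, poch]

/-- binomial series -/
lemma hypF_binom {ν : ℝ} (hν : 0 < ν) {x : ℝ} (h0 : 0 ≤ x) (h1 : x < 1) :
    hypF ν 1 1 x = (1 - x) ^ (-ν) := by
  have hp : PB (hc ν 1 1) := hc_PB (pos_ne hν) (pos_ne one_pos) (pos_ne one_pos)
  have ode : ∀ y : ℝ, |y| < 1 → (1 - y) * ps (dc (hc ν 1 1)) y = ν * ps (hc ν 1 1) y := by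
    intro y hy
    have s0 := ((hp.summable hy).hasSum).mul_left ν
    have s1 := (hp.dc.summable hy).hasSum
    have t1 := hp.mul_ps_dc hy
    have e := (s1.sub t1).unique (hs_congr s0 fun k => by
      have := hc_succ (a := ν) (b := 1) (c := 1) (pos_ne one_pos) k
      have hk : (1 : ℝ) + k ≠ 0 := by positivity
      have h' : ((k : ℝ) + 1) * hc ν 1 1 (k + 1) = (ν + k) * hc ν 1 1 k := by
        apply mul_left_cancel₀ hk
        linear_combination this
      simp only [dc]
      linear_combination y ^ k * h')
    simp only [ps] at e ⊢
    linear_combination e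
  have hd : ∀ y ∈ Set.Ioo (-1 : ℝ) 1, HasDerivAt (fun y => ps (hc ν 1 1) y * (1 - y) ^ ν) 0 y := by
    intro y hy
    have hy' : |y| < 1 := abs_lt.2 hy
    have hpos : 0 < 1 - y := by linarith [hy.2]
    have d1 := hp.hasDerivAt hy'
    have d2 : HasDerivAt (fun y : ℝ => (1 - y) ^ ν) (-1 * ν * (1 - y) ^ (ν - 1)) y :=
      ((hasDerivAt_id y).const_sub 1).rpow_const (Or.inl hpos.ne')
    have d3 := d1.mul d2
    have : ps (dc (hc ν 1 1)) y * (1 - y) ^ ν +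
        ps (hc ν 1 1) y * (-1 * ν * (1 - y) ^ (ν - 1)) = 0 := by
      have := ode y hy'
      have e : (1 - y) ^ ν = (1 - y) ^ (ν - 1) * (1 - y) := by
        rw [← Real.rpow_add_one hpos.ne']; ring_nf
      rw [e]
      linear_combination (1 - y) ^ (ν - 1) * this
    rw [this] at d3
    exact d3
  have hcst := IsOpen.is_const_of_deriv_eq_zero (f := fun y => ps (hc ν 1 1) y * (1 - y) ^ ν)
    isOpen_Ioo (isPreconnected_Ioo (a := (-1 : ℝ)) (b := 1))
    (fun y hy => (hd y hy).differentiableAt.differentiableWithinAt)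
    (fun y hy => (hd y hy).deriv) (x := x) (y := 0) ⟨by linarith, h1⟩ (by norm_num)
  have hpos : 0 < 1 - x := by linarith
  simp only [ps_zero, sub_zero, Real.one_rpow, mul_one] at hcst
  rw [hypF_eq, Real.rpow_neg hpos.le]
  apply eq_inv_of_mul_eq_one_left
  rw [hcst]
  simp [hc, poch]

/-- radial eigenfunction equation in the coordinate `s` -/
def IsSol (N : ℕ) (κ : ℝ) (f f' : ℝ → ℝ) : Prop :=
  ∃ f'' : ℝ → ℝ, ∀ s : ℝ, 0 < s → s < 1 → HasDerivAt f (f' s) s ∧ HasDerivAt f' (f'' s) s ∧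
    (1 - s ^ 2) * (s ^ 2 * f'' s + s * f' s) - N * (1 + s ^ 2) * s * f' s
      + (1 - s ^ 2) * κ * f s = 0

noncomputable def wr (N : ℕ) (f f' g g' : ℝ → ℝ) (s : ℝ) : ℝ :=
  s * ((1 - s ^ 2) / s) ^ N * (f s * g' s - f' s * g s)

lemma wr_const {N : ℕ} (hN : 1 ≤ N) {κ : ℝ} {f f' g g' : ℝ → ℝ} (hf : IsSol N κ f f')
    (hg : IsSol N κ g g') :
    ∃ C : ℝ, ∀ s : ℝ, 0 < s → s < 1 → wr N f f' g g' s = C := by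
  obtain ⟨f'', hf⟩ := hf
  obtain ⟨g'', hg⟩ := hg
  obtain ⟨M, rfl⟩ : ∃ M, N = M + 1 := ⟨N - 1, by omega⟩
  have hd : ∀ s ∈ Set.Ioo (0 : ℝ) 1, HasDerivAt (wr (M + 1) f f' g g') 0 s := by
    intro s hs
    obtain ⟨df, df', of⟩ := hf s hs.1 hs.2
    obtain ⟨dg, dg', og⟩ := hg s hs.1 hs.2
    have hs0 : s ≠ 0 := hs.1.ne'
    have d1 : HasDerivAt (fun s : ℝ => (1 - s ^ 2) / s)
        ((-(2 * s) * s - (1 - s ^ 2) * 1) / s ^ 2) s := by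
      have := ((hasDerivAt_pow 2 s).const_sub 1).div (hasDerivAt_id s) hs0
      exact this.congr_deriv (by simp)
    have d2 := ((hasDerivAt_id s).mul (d1.pow (M + 1))).mul ((df.mul dg').sub (df'.mul dg))
    refine d2.congr_deriv ?_
    simp only [Pi.mul_apply, Pi.sub_apply, Pi.pow_apply, id, Nat.add_sub_cancel]
    push_cast at of og ⊢
    have key : ((1 - s ^ 2) * (s ^ 2 * (f s * g'' s - f'' s * g s) + s * (f s * g' s - f' s * g s))
        - (M + 1) * (1 + s ^ 2) * s * (f s * g' s - f' s * g s)) = 0 := by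
      linear_combination f s * og - g s * of
    rw [pow_succ]
    generalize ((1 - s ^ 2) / s) ^ M = Q
    linear_combination (norm := (field_simp; ring)) Q / s ^ 2 * key
  refine ⟨wr (M + 1) f f' g g' (1 / 2), fun s h0 h1 => ?_⟩
  exact IsOpen.is_const_of_deriv_eq_zero isOpen_Ioo (isPreconnected_Ioo (a := (0 : ℝ)) (b := 1))
    (fun y hy => (hd y hy).differentiableAt.differentiableWithinAt)
    (fun y hy => (hd y hy).deriv) ⟨h0, h1⟩ (by norm_num)

structure Hyp (N : ℕ) (l : ℝ) : Prop where
  a1 : ∀ k : ℕ, l ≠ -(k : ℝ)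
  a2 : ∀ k : ℕ, l - ((N : ℝ) - 1) / 2 ≠ -(k : ℝ)
  a3 : ∀ k : ℕ, ((N : ℝ) + 1) / 2 - l ≠ -(k : ℝ)
  a4 : ∀ k : ℕ, (N : ℝ) - l ≠ -(k : ℝ)
  a5 : ∀ k : ℕ, (N : ℝ) - 2 * l ≠ -(k : ℝ)
  a6 : ∀ k : ℕ, 2 * l - (N : ℝ) ≠ -(k : ℝ)
  a7 : ∀ k : ℕ, l - (N : ℝ) / 2 + 1 ≠ -(k : ℝ)
  a8 : ∀ k : ℕ, (N : ℝ) / 2 - l + 1 ≠ -(k : ℝ)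

lemma Hyp.symm {N : ℕ} {l : ℝ} (h : Hyp N l) : Hyp N (N - l) where
  a1 := h.a4
  a2 k := by convert h.a3 k using 1; ring
  a3 k := by convert h.a2 k using 1; ring
  a4 k := by convert h.a1 k using 1; ring
  a5 k := by convert h.a6 k using 1; ring
  a6 k := by convert h.a5 k using 1; ring
  a7 k := by convert h.a8 k using 1; ring
  a8 k := by convert h.a7 k using 1; ring

/-- coefficients at `s = 0` -/
noncomputable def fc (N : ℕ) (l : ℝ) : ℕ → ℝ := hc l ((N : ℝ) / 2) (l - (N : ℝ) / 2 + 1)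

noncomputable def fs (N : ℕ) (l s : ℝ) : ℝ := (4 * s) ^ l * ps (fc N l) (s ^ 2)

noncomputable def fs' (N : ℕ) (l s : ℝ) : ℝ :=
  (4 * s) ^ l * (l / s * ps (fc N l) (s ^ 2) + 2 * s * ps (dc (fc N l)) (s ^ 2))

noncomputable def uc (N : ℕ) (l : ℝ) : ℕ → ℝ :=
  hc l (l - ((N : ℝ) - 1) / 2) (((N : ℝ) + 1) / 2)

noncomputable def zz (s : ℝ) : ℝ := ((1 - s) / (1 + s)) ^ 2

noncomputable def us (N : ℕ) (l s : ℝ) : ℝ := (1 - zz s) ^ l * ps (uc N l) (zz s)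

noncomputable def us' (N : ℕ) (l s : ℝ) : ℝ :=
  (1 - zz s) ^ l * (l * (1 - s) / (s * (1 + s)) * ps (uc N l) (zz s)
    + (-4 * (1 - s) / (1 + s) ^ 3) * ps (dc (uc N l)) (zz s))

lemma fc_PB {N : ℕ} (hN : 1 ≤ N) {l : ℝ} (h : Hyp N l) : PB (fc N l) := by
  have : (0 : ℝ) < N := by exact_mod_cast hN
  exact hc_PB h.a1 (pos_ne (by positivity)) h.a7

lemma uc_PB {N : ℕ} {l : ℝ} (h : Hyp N l) : PB (uc N l) :=
  hc_PB h.a1 h.a2 (pos_ne (by positivity))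

lemma sq_lt' {s : ℝ} (h0 : 0 < s) (h1 : s < 1) : |s ^ 2| < 1 := by
  rw [abs_of_pos (by positivity)]
  exact pow_lt_one₀ h0.le h1 (by norm_num)

lemma one_sub_zz {s : ℝ} (h0 : 0 < s) : 1 - zz s = 4 * s / (1 + s) ^ 2 := by
  unfold zz
  field_simp
  ring

lemma zz_lt {s : ℝ} (h0 : 0 < s) : |zz s| < 1 := by
  have h := one_sub_zz h0
  have : 0 < 4 * s / (1 + s) ^ 2 := by positivity
  have h2 : 0 ≤ zz s := by unfold zz; positivity
  rw [abs_of_nonneg h2]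
  linarith

lemma zz_deriv {s : ℝ} (h0 : 0 < s) : HasDerivAt zz (-4 * (1 - s) / (1 + s) ^ 3) s := by
  have h1 : (1 + s) ≠ 0 := by positivity
  have := (((hasDerivAt_id s).const_sub 1).div ((hasDerivAt_id s).const_add 1) h1).pow 2
  refine this.congr_deriv ?_
  simp only [id, Pi.div_apply]
  push_cast
  field_simp
  ring

lemma fs_sol {N : ℕ} (hN : 1 ≤ N) {l : ℝ} (h : Hyp N l) :
    IsSol N (l * (N - l)) (fs N l) (fs' N l) := by
  have hp := fc_PB hN h
  refine ⟨fun s => (4 * s) ^ l * (l / s * (l / s * ps (fc N l) (s ^ 2)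
    + 2 * s * ps (dc (fc N l)) (s ^ 2)) + (-l / s ^ 2 * ps (fc N l) (s ^ 2)
      + l / s * (ps (dc (fc N l)) (s ^ 2) * (2 * s)) + (2 * ps (dc (fc N l)) (s ^ 2) +
        2 * s * (ps (dc (dc (fc N l))) (s ^ 2) * (2 * s))))), fun s h0 h1 => ?_⟩
  have hs := sq_lt' h0 h1
  have hs0 : s ≠ 0 := h0.ne'
  have dsq : HasDerivAt (fun s : ℝ => s ^ 2) (2 * s) s := by simpa using hasDerivAt_pow 2 s
  have d0 : HasDerivAt (fun s => ps (fc N l) (s ^ 2)) (ps (dc (fc N l)) (s ^ 2) * (2 * s)) s :=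
    HasDerivAt.comp (h₂ := ps (fc N l)) (h := fun s : ℝ => s ^ 2) s (hp.hasDerivAt hs) dsq
  have d1 : HasDerivAt (fun s => ps (dc (fc N l)) (s ^ 2))
      (ps (dc (dc (fc N l))) (s ^ 2) * (2 * s)) s :=
    HasDerivAt.comp (h₂ := ps (dc (fc N l))) (h := fun s : ℝ => s ^ 2) s (hp.dc.hasDerivAt hs) dsq
  have dE : HasDerivAt (fun s : ℝ => (4 * s) ^ l) ((4 * s) ^ l * (l / s)) s := by
    have h4 : HasDerivAt (fun s : ℝ => 4 * s) 4 s := by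
      simpa using (hasDerivAt_id s).const_mul 4
    have := h4.rpow_const (p := l) (Or.inl (by positivity))
    refine this.congr_deriv ?_
    rw [Real.rpow_sub_one (by positivity)]
    field_simp
  have dl : HasDerivAt (fun s : ℝ => l / s) (-l / s ^ 2) s := by
    have := (hasDerivAt_const s l).div (hasDerivAt_id s) hs0
    exact this.congr_deriv (by simp)
  have d2s : HasDerivAt (fun s : ℝ => 2 * s) 2 s := by
    simpa using (hasDerivAt_id s).const_mul 2
  refine ⟨?_, ?_, ?_⟩
  · refine (dE.mul d0).congr_deriv ?_
    simp only [fs']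
    ring
  · refine (dE.mul ((dl.mul d0).add (d2s.mul d1))).congr_deriv ?_
    simp only [Pi.mul_apply, Pi.add_apply]
    ring
  · have ode := hc_ode h.a7 hp hs
    simp only [fs, fs']
    change s ^ 2 * (1 - s ^ 2) * ps (dc (dc (fc N l))) (s ^ 2) +
      _ * ps (dc (fc N l)) (s ^ 2) - _ * ps (fc N l) (s ^ 2) = 0 at ode
    linear_combination (norm := (field_simp; ring)) (4 * s) ^ l * 4 * s ^ 2 * ode

lemma us_sol {N : ℕ} {l : ℝ} (h : Hyp N l) :
    IsSol N (l * (N - l)) (us N l) (us' N l) := by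
  have hp := uc_PB h
  refine ⟨fun s => (1 - zz s) ^ l * (l * (1 - s) / (s * (1 + s)) *
    (l * (1 - s) / (s * (1 + s)) * ps (uc N l) (zz s)
    + (-4 * (1 - s) / (1 + s) ^ 3) * ps (dc (uc N l)) (zz s)) +
    (l * (-1 - 2 * s + s ^ 2) / (s * (1 + s)) ^ 2 * ps (uc N l) (zz s)
      + l * (1 - s) / (s * (1 + s)) * (ps (dc (uc N l)) (zz s) * (-4 * (1 - s) / (1 + s) ^ 3))
      + (8 * (2 - s) / (1 + s) ^ 4 * ps (dc (uc N l)) (zz s) +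
        (-4 * (1 - s) / (1 + s) ^ 3) * (ps (dc (dc (uc N l))) (zz s)
          * (-4 * (1 - s) / (1 + s) ^ 3))))), fun s h0 h1 => ?_⟩
  have hs := zz_lt h0
  have hs0 : s ≠ 0 := h0.ne'
  have hs1 : 1 + s ≠ 0 := by positivity
  have dz := zz_deriv h0
  have d0 : HasDerivAt (fun s => ps (uc N l) (zz s))
      (ps (dc (uc N l)) (zz s) * (-4 * (1 - s) / (1 + s) ^ 3)) s :=
    (hp.hasDerivAt hs).comp s dz
  have d1 : HasDerivAt (fun s => ps (dc (uc N l)) (zz s))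
      (ps (dc (dc (uc N l))) (zz s) * (-4 * (1 - s) / (1 + s) ^ 3)) s :=
    (hp.dc.hasDerivAt hs).comp s dz
  have hzpos : 0 < 1 - zz s := by linarith [(abs_lt.1 hs).2]
  have dE : HasDerivAt (fun s : ℝ => (1 - zz s) ^ l)
      ((1 - zz s) ^ l * (l * (1 - s) / (s * (1 + s)))) s := by
    have := (dz.const_sub 1).rpow_const (p := l) (Or.inl hzpos.ne')
    refine this.congr_deriv ?_
    rw [Real.rpow_sub_one hzpos.ne']
    generalize (1 - zz s) ^ l = E
    rw [one_sub_zz h0]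
    field_simp
  have dl : HasDerivAt (fun s : ℝ => l * (1 - s) / (s * (1 + s)))
      (l * (-1 - 2 * s + s ^ 2) / (s * (1 + s)) ^ 2) s := by
    have := (((hasDerivAt_id s).const_sub 1).const_mul l).div
      ((hasDerivAt_id s).mul ((hasDerivAt_id s).const_add 1)) (by simpa using ⟨hs0, hs1⟩)
    refine this.congr_deriv ?_
    simp only [id, Pi.mul_apply]
    field_simp
    ring
  have dz2 : HasDerivAt (fun s : ℝ => -4 * (1 - s) / (1 + s) ^ 3)
      (8 * (2 - s) / (1 + s) ^ 4) s := by
    have := (((hasDerivAt_id s).const_sub 1).const_mul (-4)).div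
      (((hasDerivAt_id s).const_add 1).pow 3) (by simpa using hs1)
    refine this.congr_deriv ?_
    simp only [id, Pi.pow_apply]
    push_cast
    field_simp
    ring
  refine ⟨?_, ?_, ?_⟩
  · refine (dE.mul d0).congr_deriv ?_
    simp only [us']
    ring
  · refine (dE.mul ((dl.mul d0).add (dz2.mul d1))).congr_deriv ?_
    simp only [Pi.mul_apply, Pi.add_apply]
    ring
  · have ode := hc_ode (pos_ne (by positivity)) hp hs
    simp only [us, us']
    change zz s * (1 - zz s) * ps (dc (dc (uc N l))) (zz s) +
      _ * ps (dc (uc N l)) (zz s) - _ * ps (uc N l) (zz s) = 0 at ode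
    generalize ps (dc (dc (uc N l))) (zz s) = G2 at *
    generalize ps (dc (uc N l)) (zz s) = G1 at *
    generalize ps (uc N l) (zz s) = G0 at *
    generalize (1 - zz s) ^ l = E at *
    unfold zz at ode
    linear_combination (norm := (field_simp; ring)) (4 * s * (1 - s) / (1 + s)) * E * ode

lemma wr_lim {N : ℕ} (hN : 1 ≤ N) {l : ℝ} (h : Hyp N l) :
    Tendsto (wr N (fs N l) (fs' N l) (fs N (N - l)) (fs' N (N - l))) (𝓝[>] 0)
      (𝓝 (4 ^ N * ((N : ℝ) - 2 * l))) := by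
  have hp := fc_PB hN h
  have hq := fc_PB hN h.symm
  have hsq : Tendsto (fun s : ℝ => s ^ 2) (𝓝[>] 0) (𝓝 0) := by
    have : Continuous fun s : ℝ => s ^ 2 := by fun_prop
    have := this.tendsto 0
    simp only [ne_eq, OfNat.ofNat_ne_zero, not_false_eq_true, zero_pow] at this
    exact this.mono_left nhdsWithin_le_nhds
  have hz : |(0 : ℝ)| < 1 := by simp
  have c0 := (hp.hasDerivAt hz).continuousAt.tendsto.comp hsq
  have c1 := (hp.dc.hasDerivAt hz).continuousAt.tendsto.comp hsq
  have e0 := (hq.hasDerivAt hz).continuousAt.tendsto.comp hsq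
  have e1 := (hq.dc.hasDerivAt hz).continuousAt.tendsto.comp hsq
  have one1 : fc N l 0 = 1 := by simp [fc, hc, poch]
  have one2 : fc N (N - l) 0 = 1 := by simp [fc, hc, poch]
  rw [ps_zero, one1] at c0
  rw [ps_zero, one2] at e0
  have hpw : Tendsto (fun s : ℝ => (1 - s ^ 2) ^ N) (𝓝[>] 0) (𝓝 ((1 - 0) ^ N)) :=
    (hsq.const_sub 1).pow N
  have T := ((hpw.const_mul (4 ^ N)).mul (((c0.mul e0).const_mul ((N : ℝ) - 2 * l)).add
    ((hsq.const_mul 2).mul ((c0.mul e1).sub (e0.mul c1)))))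
  refine (T.congr' ?_).trans (le_of_eq ?_)
  · have h01 : ∀ᶠ s : ℝ in 𝓝[>] 0, s ∈ Set.Ioo (0 : ℝ) 1 := Ioo_mem_nhdsGT (by norm_num)
    filter_upwards [h01] with s hs
    have hs0 : 0 < s := hs.1
    simp only [wr, fs, fs', Function.comp]
    have hE : (4 * s) ^ ((N : ℝ) - l) = 4 ^ N * s ^ N / (4 * s) ^ l := by
      rw [Real.rpow_sub (by positivity), Real.rpow_natCast, mul_pow]
    have hEp : 0 < (4 * s) ^ l := by positivity
    rw [hE, div_pow]
    generalize (4 * s) ^ l = E at *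
    field_simp
    ring
  · congr 1
    simp

lemma exists_comb {N : ℕ} (hN : 1 ≤ N) {l : ℝ} (h : Hyp N l) :
    ∃ α β : ℝ, ∀ s : ℝ, 0 < s → s < 1 → us N l s = α * fs N l s + β * fs N (N - l) s := by
  have S1 := fs_sol hN h
  have S2 := fs_sol hN h.symm
  rw [show ((N : ℝ) - l) * (N - (N - l)) = l * (N - l) by ring] at S2
  have S3 := us_sol h
  obtain ⟨C, hC⟩ := wr_const hN S1 S2
  obtain ⟨C1, hC1⟩ := wr_const hN S3 S2
  obtain ⟨C2, hC2⟩ := wr_const hN S1 S3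
  have h01 : ∀ᶠ s : ℝ in 𝓝[>] 0, s ∈ Set.Ioo (0 : ℝ) 1 := Ioo_mem_nhdsGT (by norm_num)
  have hC0 : C = 4 ^ N * ((N : ℝ) - 2 * l) := by
    refine tendsto_nhds_unique (f := fun _ : ℝ => C) tendsto_const_nhds
      ((wr_lim hN h).congr' ?_)
    filter_upwards [h01] with s hs using hC s hs.1 hs.2
  have hne : C ≠ 0 := by
    rw [hC0]
    have := h.a5 0
    simp only [Nat.cast_zero, neg_zero] at this
    positivity
  refine ⟨C1 / C, C2 / C, fun s h0 h1 => ?_⟩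
  have i0 := hC s h0 h1
  have i1 := hC1 s h0 h1
  have i2 := hC2 s h0 h1
  have : C * us N l s = C1 * fs N l s + C2 * fs N (N - l) s := by
    rw [← i0, ← i1, ← i2]
    simp only [wr]
    ring
  field_simp
  linear_combination this

/-- the connection constant -/
noncomputable def Ac (N : ℕ) (l : ℝ) : ℝ :=
  Real.Gamma (((N : ℝ) + 1) / 2) * Real.Gamma ((N : ℝ) - 2 * l) /
    (Real.Gamma (((N : ℝ) + 1) / 2 - l) * Real.Gamma ((N : ℝ) - l))

noncomputable def Rc (N : ℕ) (l : ℝ) : ℝ :=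
  Real.Gamma (l - (N : ℝ) / 2 + 1) / (Real.Gamma l * Real.Gamma ((N : ℝ) / 2))

lemma Rc_ne {N : ℕ} (hN : 1 ≤ N) {l : ℝ} (h : Hyp N l) : Rc N l ≠ 0 := by
  have : (0 : ℝ) < N := by exact_mod_cast hN
  exact div_ne_zero (Real.Gamma_ne_zero h.a7) (mul_ne_zero (Real.Gamma_ne_zero h.a1)
    (Real.Gamma_ne_zero (pos_ne (by positivity))))

lemma Ac_ne {N : ℕ} {l : ℝ} (h : Hyp N l) : Ac N l ≠ 0 :=
  div_ne_zero (mul_ne_zero (Real.Gamma_ne_zero (pos_ne (by positivity)))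
    (Real.Gamma_ne_zero h.a5)) (mul_ne_zero (Real.Gamma_ne_zero h.a3) (Real.Gamma_ne_zero h.a4))

lemma Ac_Rc {N : ℕ} (hN : 1 ≤ N) {l : ℝ} (h : Hyp N l) :
    Ac N l * 4 ^ l * Rc N l = Real.Gamma (((N : ℝ) + 1) / 2) / Real.Gamma ((N : ℝ) / 2) *
      2 ^ (N : ℝ) / (2 * √Real.pi) * (l - (N : ℝ) / 2) * Real.Gamma (l - (N : ℝ) / 2)
        * Real.Gamma ((N : ℝ) / 2 - l) / (Real.Gamma ((N : ℝ) - l) * Real.Gamma l) := by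
  have hNp : (0 : ℝ) < N := by exact_mod_cast hN
  have g1 := Real.Gamma_ne_zero h.a1
  have g3 := Real.Gamma_ne_zero h.a3
  have g4 := Real.Gamma_ne_zero h.a4
  have gN : Real.Gamma ((N : ℝ) / 2) ≠ 0 := Real.Gamma_ne_zero (pos_ne (by positivity))
  have hμ : l - (N : ℝ) / 2 ≠ 0 := by
    have := h.a5 0
    intro h'
    apply this
    simp
    linarith
  have hpi : √Real.pi ≠ 0 := by positivity
  have dup := Real.Gamma_mul_Gamma_add_half ((N : ℝ) / 2 - l)
  rw [show (N : ℝ) / 2 - l + 1 / 2 = ((N : ℝ) + 1) / 2 - l by ring,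
    show 2 * ((N : ℝ) / 2 - l) = (N : ℝ) - 2 * l by ring,
    show 1 - ((N : ℝ) - 2 * l) = 1 + 2 * l - N by ring, Real.rpow_sub two_pos,
    Real.rpow_add two_pos, Real.rpow_one, Real.rpow_mul two_pos.le] at dup
  norm_num at dup
  have hp : (2 : ℝ) ^ (N : ℝ) ≠ 0 := by positivity
  rw [← Real.rpow_natCast] at dup
  have hl : (4 : ℝ) ^ l ≠ 0 := by positivity
  unfold Ac Rc
  rw [Real.Gamma_add_one hμ]
  have dup' : Real.Gamma ((N : ℝ) - 2 * l) * 4 ^ l = Real.Gamma ((N : ℝ) / 2 - l) *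
      Real.Gamma (((N : ℝ) + 1) / 2 - l) * 2 ^ (N : ℝ) / (2 * √Real.pi) := by
    rw [dup]
    field_simp
  clear dup
  generalize Real.Gamma ((N : ℝ) - 2 * l) = x1 at *
  generalize Real.Gamma ((N : ℝ) / 2 - l) = x2 at *
  generalize Real.Gamma (((N : ℝ) + 1) / 2 - l) = x3 at *
  generalize Real.Gamma (l - (N : ℝ) / 2) = x4 at *
  generalize Real.Gamma (((N : ℝ) + 1) / 2) = x5 at *
  generalize Real.Gamma ((N : ℝ) / 2) = x6 at *
  generalize Real.Gamma ((N : ℝ) - l) = x7 at *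
  generalize Real.Gamma l = x8 at *
  generalize (2 : ℝ) ^ (N : ℝ) = x9 at *
  generalize (4 : ℝ) ^ l = y at *
  linear_combination (norm := (field_simp; ring))
    x5 / (x3 * x7) * ((l - (N : ℝ) / 2) * x4 / (x8 * x6)) * dup'

lemma Ac_rel {N : ℕ} (hN : 1 ≤ N) {l : ℝ} (h : Hyp N l) :
    Ac N l * 4 ^ l * Rc N l + Ac N (N - l) * 4 ^ ((N : ℝ) - l) * Rc N (N - l) = 0 := by
  rw [Ac_Rc hN h, Ac_Rc hN h.symm]
  rw [show (N : ℝ) - l - N / 2 = N / 2 - l by ring, show (N : ℝ) / 2 - (N - l) = l - N / 2 by ring,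
    show (N : ℝ) - (N - l) = l by ring]
  ring

lemma sq_tendsto_one : Tendsto (fun s : ℝ => s ^ 2) (𝓝[<] 1) (𝓝[<] 1) := by
  refine tendsto_nhdsWithin_of_tendsto_nhds_of_eventually_within _ ?_ ?_
  · have : Continuous fun s : ℝ => s ^ 2 := by fun_prop
    have := this.tendsto 1
    simp only [one_pow] at this
    exact this.mono_left nhdsWithin_le_nhds
  · have h01 : ∀ᶠ x : ℝ in 𝓝[<] 1, x ∈ Set.Ioo (0 : ℝ) 1 := Ioo_mem_nhdsLT (by norm_num)
    filter_upwards [h01] with s hs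
    exact pow_lt_one₀ hs.1.le hs.2 (by norm_num)

lemma fs_lim_one {N : ℕ} (hN : 1 ≤ N) {l : ℝ} (h : Hyp N l) :
    Tendsto (fun s => fs N l s / ps (mb ((N : ℝ) - 1)) (s ^ 2)) (𝓝[<] 1)
      (𝓝 (4 ^ l * Rc N l)) := by
  have hNp : (1 : ℝ) ≤ N := by exact_mod_cast hN
  have A := (hc_asymp (ν := (N : ℝ) - 1) h.a1 (pos_ne (by positivity : (0 : ℝ) < (N : ℝ) / 2)) h.a7
    (by ring) (by linarith)).comp sq_tendsto_one
  have P : Tendsto (fun s : ℝ => (4 * s) ^ l) (𝓝[<] 1) (𝓝 (4 ^ l)) := by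
    have : ContinuousAt (fun s : ℝ => (4 * s) ^ l) 1 :=
      ContinuousAt.rpow_const (by fun_prop) (Or.inl (by norm_num))
    have := this.tendsto
    simp only [mul_one] at this
    exact this.mono_left nhdsWithin_le_nhds
  refine (P.mul A).congr fun s => ?_
  simp only [Function.comp, fs, hypF_eq, fc]
  ring

lemma us_lim_one {N : ℕ} {l : ℝ} (h : Hyp N l) :
    Tendsto (us N l) (𝓝[<] 1) (𝓝 1) := by
  have hz : zz 1 = 0 := by simp [zz]
  have cz : ContinuousAt zz 1 := (zz_deriv one_pos).continuousAt
  have cp : ContinuousAt (fun s => ps (uc N l) (zz s)) 1 :=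
    ContinuousAt.comp (f := zz) (g := ps (uc N l)) (by
      rw [hz]; exact ((uc_PB h).hasDerivAt (by simp)).continuousAt) cz
  have cE : ContinuousAt (fun s => (1 - zz s) ^ l) 1 :=
    ContinuousAt.rpow_const (by fun_prop) (Or.inl (by rw [hz]; norm_num))
  have := (cE.mul cp).tendsto
  simp only [Pi.mul_apply, hz, ps_zero, sub_zero, Real.one_rpow, one_mul] at this
  have e : uc N l 0 = 1 := by simp [uc, hc, poch]
  rw [e] at this
  exact this.mono_left nhdsWithin_le_nhds

lemma ab_rel {N : ℕ} (hN : 1 ≤ N) {l : ℝ} (h : Hyp N l) {α β : ℝ}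
    (hu : ∀ s : ℝ, 0 < s → s < 1 → us N l s = α * fs N l s + β * fs N (N - l) s) :
    α * (4 ^ l * Rc N l) + β * (4 ^ ((N : ℝ) - l) * Rc N (N - l)) = 0 := by
  have hNp : (1 : ℝ) ≤ N := by exact_mod_cast hN
  have T := ((fs_lim_one hN h).const_mul α).add ((fs_lim_one hN h.symm).const_mul β)
  have hM := (ps_tendsto_atTop (mb_PB ((N : ℝ) - 1)) (mb_nonneg _)
    (mb_not_summable (by linarith))).comp sq_tendsto_one
  have U := (us_lim_one h).div_atTop hM
  refine tendsto_nhds_unique T (U.congr' ?_)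
  have h01 : ∀ᶠ x : ℝ in 𝓝[<] 1, x ∈ Set.Ioo (0 : ℝ) 1 := Ioo_mem_nhdsLT (by norm_num)
  filter_upwards [h01] with s hs
  simp only [Function.comp]
  rw [hu s hs.1 hs.2]
  ring

lemma comb_eq {N : ℕ} (hN : 1 ≤ N) {l : ℝ} (h : Hyp N l) :
    ∃ κ : ℝ, ∀ s : ℝ, 0 < s → s < 1 →
      us N l s = κ * (Ac N l * fs N l s + Ac N (N - l) * fs N (N - l) s) := by
  obtain ⟨α, β, hu⟩ := exists_comb hN h
  have r1 := ab_rel hN h hu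
  have r2 := Ac_rel hN h
  have n1 : (4 : ℝ) ^ l * Rc N l ≠ 0 := mul_ne_zero (by positivity) (Rc_ne hN h)
  have n2 := Ac_ne h.symm
  refine ⟨β / Ac N (N - l), fun s h0 h1 => ?_⟩
  have : α = β / Ac N (N - l) * Ac N l := by
    have h3 : α * Ac N (N - l) = β * Ac N l :=
      mul_right_cancel₀ n1 (by linear_combination Ac N (N - l) * r1 - β * r2)
    rw [div_mul_eq_mul_div, eq_div_iff n2]
    exact h3
  rw [hu s h0 h1, this]
  field_simp

lemma fs_lim_zero {N : ℕ} (hN : 1 ≤ N) {l : ℝ} (h : Hyp N l) :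
    Tendsto (fun s : ℝ => ps (fc N l) (s ^ 2)) (𝓝[>] 0) (𝓝 1) := by
  have hsq : Tendsto (fun s : ℝ => s ^ 2) (𝓝[>] 0) (𝓝 0) := by
    have : Continuous fun s : ℝ => s ^ 2 := by fun_prop
    have := this.tendsto 0
    simp only [ne_eq, OfNat.ofNat_ne_zero, not_false_eq_true, zero_pow] at this
    exact this.mono_left nhdsWithin_le_nhds
  have hz : |(0 : ℝ)| < 1 := by simp
  have c0 := ((fc_PB hN h).hasDerivAt hz).continuousAt.tendsto.comp hsq
  have one1 : fc N l 0 = 1 := by simp [fc, hc, poch]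
  rw [ps_zero, one1] at c0
  exact c0

lemma zz_tendsto : Tendsto zz (𝓝[>] 0) (𝓝[<] 1) := by
  refine tendsto_nhdsWithin_of_tendsto_nhds_of_eventually_within _ ?_ ?_
  · have : ContinuousAt zz 0 := by
      unfold zz
      exact ((continuousAt_const.sub continuousAt_id).div (continuousAt_const.add continuousAt_id)
        (by norm_num)).pow 2
    have := this.tendsto
    rw [show zz 0 = 1 by simp [zz]] at this
    exact this.mono_left nhdsWithin_le_nhds
  · filter_upwards [self_mem_nhdsWithin] with s hs
    exact (abs_lt.1 (zz_lt hs)).2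

lemma us_lim_zero {N : ℕ} {l : ℝ} (h : Hyp N l) (hl : (N : ℝ) < 2 * l) :
    Tendsto (fun s => us N l s / (4 * s) ^ ((N : ℝ) - l)) (𝓝[>] 0) (𝓝 (Ac N (N - l))) := by
  have hν : 0 < 2 * l - (N : ℝ) := by linarith
  have gν : Real.Gamma (2 * l - N) ≠ 0 := Real.Gamma_ne_zero (pos_ne hν)
  have T1 := hc_asymp (ν := 2 * l - N) h.a1 h.a2 (pos_ne (by positivity : (0 : ℝ) < ((N : ℝ) + 1) / 2))
    (by ring) hν.le
  have T2 := hc_asymp (ν := 2 * l - N) (c := 1) (pos_ne hν) (pos_ne one_pos) (pos_ne one_pos)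
    (by ring) hν.le
  have hM := ps_tendsto_atTop (mb_PB (2 * l - N)) (mb_nonneg _) (mb_not_summable hν.le)
  have T3 := ((T1.div T2 (by simp [gν])).comp zz_tendsto)
  have Q : Tendsto (fun s : ℝ => (1 / (1 + s) ^ 2) ^ ((N : ℝ) - l)) (𝓝[>] 0) (𝓝 1) := by
    have : ContinuousAt (fun s : ℝ => (1 / (1 + s) ^ 2) ^ ((N : ℝ) - l)) 0 :=
      ContinuousAt.rpow_const (continuousAt_const.div (by fun_prop) (by norm_num))
        (Or.inl (by norm_num))
    have := this.tendsto
    simp only [add_zero, one_pow, div_one, Real.one_rpow] at this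
    exact this.mono_left nhdsWithin_le_nhds
  have T4 := Q.mul T3
  refine (T4.congr' ?_).trans (le_of_eq ?_)
  · have hMz := hM.comp zz_tendsto
    filter_upwards [self_mem_nhdsWithin, hMz.eventually (eventually_gt_atTop 0)] with s hs hm
    have hs : 0 < s := hs
    have hz := (abs_lt.1 (zz_lt hs)).2
    have hz0 : 0 ≤ zz s := by unfold zz; positivity
    have hzp : 0 < 1 - zz s := by linarith
    simp only [Function.comp, Pi.div_apply] at hm ⊢
    rw [hypF_binom hν hz0 hz, hypF_eq]
    simp only [us, uc]
    have e1 : (1 - zz s) ^ l = (1 - zz s) ^ ((N : ℝ) - l) * (1 - zz s) ^ (2 * l - (N : ℝ)) := by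
      rw [← Real.rpow_add hzp]; ring_nf
    have e2 : (1 - zz s) ^ ((N : ℝ) - l) = (4 * s) ^ ((N : ℝ) - l) *
        (1 / (1 + s) ^ 2) ^ ((N : ℝ) - l) := by
      rw [← Real.mul_rpow (by positivity) (by positivity), one_sub_zz hs]
      congr 1
      ring
    rw [e1, e2, Real.rpow_neg hzp.le]
    have p1 : 0 < (4 * s) ^ ((N : ℝ) - l) := by positivity
    have p2 : 0 < (1 - zz s) ^ (2 * l - (N : ℝ)) := by positivity
    clear e1 e2
    generalize (4 * s) ^ ((N : ℝ) - l) = x1 at p1 ⊢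
    generalize (1 - zz s) ^ (2 * l - (N : ℝ)) = x2 at p2 ⊢
    generalize ps (mb (2 * l - (N : ℝ))) (zz s) = m at hm ⊢
    generalize ps (hc l (l - ((N : ℝ) - 1) / 2) (((N : ℝ) + 1) / 2)) (zz s) = G
    generalize (1 / (1 + s) ^ 2) ^ ((N : ℝ) - l) = x3
    field_simp
  · congr 1
    unfold Ac
    rw [show ((N : ℝ) + 1) / 2 - (N - l) = l - (N - 1) / 2 by ring,
      show (N : ℝ) - (N - l) = l by ring, show (N : ℝ) - 2 * (N - l) = 2 * l - N by ring]
    simp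
    have g1 := Real.Gamma_ne_zero h.a1
    have g2 := Real.Gamma_ne_zero h.a2
    field_simp

lemma main_pos {N : ℕ} (hN : 1 ≤ N) {l : ℝ} (h : Hyp N l) (hl : (N : ℝ) < 2 * l) (s : ℝ)
    (h0 : 0 < s) (h1 : s < 1) :
      us N l s = Ac N l * fs N l s + Ac N (N - l) * fs N (N - l) s := by
  obtain ⟨κ, hκ⟩ := comb_eq hN h
  have T := us_lim_zero h hl
  have hν : 0 < 2 * l - (N : ℝ) := by linarith
  have P : Tendsto (fun s : ℝ => (4 * s) ^ (2 * l - (N : ℝ))) (𝓝[>] 0) (𝓝 0) := by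
    have : ContinuousAt (fun s : ℝ => (4 * s) ^ (2 * l - (N : ℝ))) 0 :=
      ContinuousAt.rpow_const (by fun_prop) (Or.inr hν.le)
    have := this.tendsto
    simp only [mul_zero, Real.zero_rpow hν.ne'] at this
    exact this.mono_left nhdsWithin_le_nhds
  have U := (((P.mul (fs_lim_zero hN h)).const_mul (Ac N l)).add
    ((fs_lim_zero hN h.symm).const_mul (Ac N (N - l)))).const_mul κ
  have e := tendsto_nhds_unique T (U.congr' (by
    have h01 : ∀ᶠ s : ℝ in 𝓝[>] 0, s ∈ Set.Ioo (0 : ℝ) 1 := Ioo_mem_nhdsGT (by norm_num)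
    filter_upwards [h01] with s hs
    have hs0 := hs.1
    rw [hκ s hs.1 hs.2]
    simp only [fs]
    have : (4 * s) ^ l = (4 * s) ^ (2 * l - (N : ℝ)) * (4 * s) ^ ((N : ℝ) - l) := by
      rw [← Real.rpow_add (by positivity)]; ring_nf
    rw [this]
    have : 0 < (4 * s) ^ ((N : ℝ) - l) := by positivity
    field_simp))
  have n2 := Ac_ne h.symm
  have : κ = 1 := by
    apply mul_right_cancel₀ n2
    linear_combination -e
  rw [hκ s h0 h1, this, one_mul]

lemma main_all {N : ℕ} (hN : 1 ≤ N) {l : ℝ} (h : Hyp N l) (s : ℝ)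
    (h0 : 0 < s) (h1 : s < 1) :
      us N l s = Ac N l * fs N l s + Ac N (N - l) * fs N (N - l) s := by
  have hne : (N : ℝ) ≠ 2 * l := by
    have := h.a5 0
    intro h'
    apply this
    simp
    linarith
  rcases lt_or_gt_of_ne hne with hl | hl
  · exact main_pos hN h hl s h0 h1
  · have key : ∀ s : ℝ, 0 < s → s < 1 →
        us N (N - l) s = Ac N l * fs N l s + Ac N (N - l) * fs N (N - l) s := by
      intro s h0 h1
      rw [main_pos hN h.symm (by linarith) s h0 h1, show (N : ℝ) - (N - l) = l by ring]
      ring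
    obtain ⟨κ, hκ⟩ := comb_eq hN h
    have e := tendsto_nhds_unique (us_lim_one h) (((us_lim_one h.symm).const_mul κ).congr' (by
      have h01 : ∀ᶠ x : ℝ in 𝓝[<] 1, x ∈ Set.Ioo (0 : ℝ) 1 := Ioo_mem_nhdsLT (by norm_num)
      filter_upwards [h01] with s hs
      rw [hκ s hs.1 hs.2, key s hs.1 hs.2]))
    rw [hκ s h0 h1]
    have : κ = 1 := by linarith
    rw [this, one_mul]

lemma hypF_comm (a b c x : ℝ) : hypF a b c x = hypF b a c x := by
  unfold hypF
  congr 1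
  ext k
  rw [mul_comm (poch a k)]

theorem statement13 (n : ℕ) (hn : 2 ≤ n) (lam : ℝ)
    (h1 : ∀ k : ℕ, lam ≠ -(k : ℝ))
    (h2 : ∀ k : ℕ, lam - (n : ℝ) / 2 + 1 ≠ -(k : ℝ))
    (h3 : ∀ k : ℕ, (n : ℝ) / 2 - lam ≠ -(k : ℝ))
    (h4 : ∀ k : ℕ, (n : ℝ) - lam - 1 ≠ -(k : ℝ))
    (h5 : ∀ k : ℕ, (n : ℝ) - 2 * lam - 1 ≠ -(k : ℝ))
    (h6 : ∀ k : ℕ, 2 * lam - (n : ℝ) + 1 ≠ -(k : ℝ))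
    (h7 : ∀ k : ℕ, lam - ((n : ℝ) - 3) / 2 ≠ -(k : ℝ))
    (h8 : ∀ k : ℕ, ((n : ℝ) + 1) / 2 - lam ≠ -(k : ℝ))
    (A B : ℝ)
    (hA : A = Real.Gamma ((n : ℝ) / 2) * Real.Gamma ((n : ℝ) - 2 * lam - 1) /
      (Real.Gamma ((n : ℝ) / 2 - lam) * Real.Gamma ((n : ℝ) - lam - 1)))
    (hB : B = Real.Gamma ((n : ℝ) / 2) * Real.Gamma (2 * lam - (n : ℝ) + 1) /
      (Real.Gamma lam * Real.Gamma (lam - (n : ℝ) / 2 + 1))) :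
    ∀ s : ℝ, 0 < s → s < 1 →
      letI r : ℝ := (1 - s) / (1 + s)
      (1 - r ^ 2) ^ lam * hypF lam (lam - (n : ℝ) / 2 + 1) ((n : ℝ) / 2) (r ^ 2) =
        A * (4 * s) ^ lam *
            hypF lam (((n : ℝ) - 1) / 2) (lam - ((n : ℝ) - 3) / 2) (s ^ 2) +
          B * (4 * s) ^ ((n : ℝ) - 1 - lam) *
            hypF (((n : ℝ) - 1) / 2) ((n : ℝ) - lam - 1) (((n : ℝ) + 1) / 2 - lam) (s ^ 2) := by
  intro s h0 hs1
  obtain ⟨N, rfl⟩ : ∃ N, n = N + 1 := ⟨n - 1, by omega⟩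
  have hN : 1 ≤ N := by omega
  push_cast at *
  have H : Hyp N lam :=
    { a1 := h1
      a2 := fun k => by convert h2 k using 1; ring
      a3 := h3
      a4 := fun k => by convert h4 k using 1; ring
      a5 := fun k => by convert h5 k using 1; ring
      a6 := fun k => by convert h6 k using 1; ring
      a7 := fun k => by convert h7 k using 1; ring
      a8 := fun k => by convert h8 k using 1; ring }
  have M := main_all hN H s h0 hs1
  have eA : A = Ac N lam := by
    rw [hA]
    unfold Ac
    rw [show (N : ℝ) + 1 - 2 * lam - 1 = N - 2 * lam by ring,
      show (N : ℝ) + 1 - lam - 1 = N - lam by ring]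
  have eB : B = Ac N (N - lam) := by
    rw [hB]
    unfold Ac
    rw [show ((N : ℝ) + 1) / 2 - (N - lam) = lam - (N + 1) / 2 + 1 by ring,
      show (N : ℝ) - (N - lam) = lam by ring,
      show (N : ℝ) - 2 * (N - lam) = 2 * lam - (N + 1) + 1 by ring, mul_comm (Real.Gamma lam)]
  have e1 : lam - ((N : ℝ) + 1) / 2 + 1 = lam - ((N : ℝ) - 1) / 2 := by ring
  have e2 : ((N : ℝ) + 1 - 1) / 2 = (N : ℝ) / 2 := by ring
  have e3 : lam - ((N : ℝ) + 1 - 3) / 2 = lam - (N : ℝ) / 2 + 1 := by ring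
  have e4 : (N : ℝ) + 1 - 1 - lam = N - lam := by ring
  have e5 : (N : ℝ) + 1 - lam - 1 = N - lam := by ring
  have e6 : ((N : ℝ) + 1 + 1) / 2 - lam = N - lam - (N : ℝ) / 2 + 1 := by ring
  rw [e1, e2, e3, e4, e5, e6, hypF_comm ((N : ℝ) / 2) ((N : ℝ) - lam), eA, eB]
  simp only [us, fs, uc, fc, zz, ← hypF_eq] at M
  rw [M]
  ring
end
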